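/- Let n ≥ 2, let G be a finite simple graph with vertex set {1, …, n} and edge set E, and let P = (P_1, …, P_n) be real 3×4 matrices such that every P_i is nonzero and there exist indices a ≠ b with P_a and P_b of rank 3 and with distinct centers. For each edge e = {i, j} set F_e = 𝓕(P_i, P_j), and let J_P be the linear map sending a tuple H = (H_1, …, H_n) of real 3×4 matrices to the edge-indexed tuple (H_jᵀ F_e P_i + P_jᵀ F_e H_i + H_iᵀ F_eᵀ P_j + P_iᵀ F_eᵀ H_j)_{e={i,j}∈E}. Then the rank of J_P is at most 11n − 15. -/

import Mathlib

open Matrix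

/-- The fundamental matrix of a camera pair `(P, Q)` of `3 × 4` matrices:
its `(h,k)` entry is `(-1)^(h+k)` times the determinant of the `4 × 4` matrix
obtained by stacking the rows of `P` other than row `k` (in their original order)
on top of the rows of `Q` other than row `h` (in their original order). -/
def fund {K : Type*} [CommRing K] (P Q : Matrix (Fin 3) (Fin 4) K) :
    Matrix (Fin 3) (Fin 3) K :=
  Matrix.of fun h k =>
    (-1 : K) ^ ((h : ℕ) + (k : ℕ)) *
      (Matrix.of fun r c : Fin 4 =>
          if hr : (r : ℕ) < 2 then P (k.succAbove ⟨(r : ℕ), hr⟩) c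
          else Q (h.succAbove ⟨(r : ℕ) - 2, by have := r.isLt; omega⟩) c).det

/-- The edges of a graph on `Fin n`, each represented by its unique ordered pair
`(i, j)` of adjacent vertices with `i < j`. -/
def EdgeIdx {n : ℕ} (G : SimpleGraph (Fin n)) : Type :=
  {p : Fin n × Fin n // G.Adj p.1 p.2 ∧ p.1 < p.2}

/-- The Jacobian, with respect to the camera variables, of the polynomial system
`Φ_G(Q, 𝓕(P)) = (Qⱼᵀ F_e Qᵢ + Qᵢᵀ F_eᵀ Qⱼ)_{e∈E}` evaluated at `Q = P`, where
`F_e = 𝓕(Pᵢ, Pⱼ)` for the edge `e = {i, j}`: it sends a tuple `H` of `3 × 4`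
matrices to the edge-indexed tuple
`(Hⱼᵀ F_e Pᵢ + Pⱼᵀ F_e Hᵢ + Hᵢᵀ F_eᵀ Pⱼ + Pᵢᵀ F_eᵀ Hⱼ)_{e={i,j}∈E}`. -/
def JP {K : Type*} [CommRing K] {n : ℕ} (G : SimpleGraph (Fin n))
    (P : Fin n → Matrix (Fin 3) (Fin 4) K) :
    (Fin n → Matrix (Fin 3) (Fin 4) K) →ₗ[K]
      (EdgeIdx G → Matrix (Fin 4) (Fin 4) K) where
  toFun H := fun e =>
    (H e.1.2)ᵀ * fund (P e.1.1) (P e.1.2) * P e.1.1 +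
      (P e.1.2)ᵀ * fund (P e.1.1) (P e.1.2) * H e.1.1 +
      (H e.1.1)ᵀ * (fund (P e.1.1) (P e.1.2))ᵀ * P e.1.2 +
      (P e.1.1)ᵀ * (fund (P e.1.1) (P e.1.2))ᵀ * H e.1.2
  map_add' H K := by
    funext e
    simp only [Pi.add_apply, Matrix.transpose_add, Matrix.add_mul, Matrix.mul_add]
    abel
  map_smul' c H := by
    funext e
    simp only [Pi.smul_apply, Matrix.transpose_smul, Matrix.smul_mul,
      Matrix.mul_smul, RingHom.id_apply, smul_add]


def det4 {K : Type*} [CommRing K] (u v w z : Fin 4 → K) : K :=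
  u 0 * (v 1 * (w 2 * z 3 - w 3 * z 2) - v 2 * (w 1 * z 3 - w 3 * z 1) + v 3 * (w 1 * z 2 - w 2 * z 1))
  - u 1 * (v 0 * (w 2 * z 3 - w 3 * z 2) - v 2 * (w 0 * z 3 - w 3 * z 0) + v 3 * (w 0 * z 2 - w 2 * z 0))
  + u 2 * (v 0 * (w 1 * z 3 - w 3 * z 1) - v 1 * (w 0 * z 3 - w 3 * z 0) + v 3 * (w 0 * z 1 - w 1 * z 0))
  - u 3 * (v 0 * (w 1 * z 2 - w 2 * z 1) - v 1 * (w 0 * z 2 - w 2 * z 0) + v 2 * (w 0 * z 1 - w 1 * z 0))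

theorem det_eq_det4 {K : Type*} [CommRing K] (A : Matrix (Fin 4) (Fin 4) K) :
    A.det = det4 (A 0) (A 1) (A 2) (A 3) := by
  simp [Matrix.det_succ_row_zero, Fin.sum_univ_succ, Fin.succAbove, det4]
  ring

theorem fund_apply' {K : Type*} [CommRing K] (P Q : Matrix (Fin 3) (Fin 4) K) (h k : Fin 3) :
    fund P Q h k = (-1 : K) ^ ((h : ℕ) + (k : ℕ)) *
      det4 (P (k.succAbove 0)) (P (k.succAbove 1)) (Q (h.succAbove 0)) (Q (h.succAbove 1)) := by
  rw [fund, Matrix.of_apply, det_eq_det4]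
  rfl

set_option maxHeartbeats 4000000 in
theorem skew {K : Type*} [CommRing K] (P Q : Matrix (Fin 3) (Fin 4) K) :
    Pᵀ * (fund P Q)ᵀ * Q = - (Qᵀ * fund P Q * P) := by
  have e1 : (Fin.succAbove (1 : Fin 3) (1 : Fin 2)) = 2 := rfl
  have e2 : (Fin.succAbove (2 : Fin 3) (1 : Fin 2)) = 1 := rfl
  have e3 : (Fin.succAbove (2 : Fin 3) (0 : Fin 2)) = 0 := rfl
  have e4 : (Fin.succAbove (1 : Fin 3) (0 : Fin 2)) = 0 := rfl
  have e5 : (Fin.succAbove (0 : Fin 3) (0 : Fin 2)) = 1 := rfl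
  have e6 : (Fin.succAbove (0 : Fin 3) (1 : Fin 2)) = 2 := rfl
  ext a b
  simp only [Matrix.mul_apply, Matrix.neg_apply, Matrix.transpose_apply, Fin.sum_univ_three,
    fund_apply', e1, e2, e3, e4, e5, e6, Fin.val_zero, Fin.val_one, Fin.val_two, det4]
  fin_cases a <;> fin_cases b <;> dsimp only [Fin.zero_eta, Fin.mk_one, Fin.reduceFinMk] <;> ring

/-- the obvious elements of the kernel -/
def phi {n : ℕ} (P : Fin n → Matrix (Fin 3) (Fin 4) ℝ) :
    ((Fin n → ℝ) × Matrix (Fin 4) (Fin 4) ℝ) →ₗ[ℝ] (Fin n → Matrix (Fin 3) (Fin 4) ℝ) where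
  toFun x := fun i => x.1 i • P i + P i * x.2
  map_add' x y := by
    funext i
    simp only [Prod.fst_add, Prod.snd_add, Pi.add_apply, add_smul, Matrix.mul_add]
    abel
  map_smul' c x := by
    funext i
    simp [mul_smul]

theorem phi_range {n : ℕ} (G : SimpleGraph (Fin n)) (P : Fin n → Matrix (Fin 3) (Fin 4) ℝ) :
    LinearMap.range (phi P) ≤ LinearMap.ker (JP G P) := by
  rintro _ ⟨⟨c, M⟩, rfl⟩
  rw [LinearMap.mem_ker]
  funext e
  obtain ⟨⟨i, j⟩, he⟩ := e
  have h := skew (P i) (P j)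
  simp only [JP, phi, LinearMap.coe_mk, AddHom.coe_mk, Matrix.transpose_add, Matrix.transpose_smul,
    Matrix.transpose_mul, Matrix.add_mul, Matrix.mul_add, Matrix.smul_mul, Matrix.mul_smul]
  have h1 : Mᵀ * (P i)ᵀ * (fund (P i) (P j))ᵀ * P j = - (Mᵀ * (P j)ᵀ * (fund (P i) (P j)) * P i) := by
    have := congrArg (fun X => Mᵀ * X) h
    simpa only [Matrix.mul_neg, ← Matrix.mul_assoc] using this
  have h2 : (P i)ᵀ * (fund (P i) (P j))ᵀ * (P j * M) = - ((P j)ᵀ * (fund (P i) (P j)) * (P i * M)) := by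
    have := congrArg (fun X => X * M) h
    simpa only [Matrix.neg_mul, Matrix.mul_assoc] using this
  rw [h1, h2, h]
  simp only [smul_neg]
  refine Eq.trans ?_ (rfl : (0 : Matrix (Fin 4) (Fin 4) ℝ) = _)
  abel

open Module in
theorem phi_ker {n : ℕ} (P : Fin n → Matrix (Fin 3) (Fin 4) ℝ)
    (hP : ∀ i, P i ≠ 0)
    (hab : ∃ a b : Fin n, a ≠ b ∧ (P a).rank = 3 ∧ (P b).rank = 3 ∧
      LinearMap.ker (P a).mulVecLin ≠ LinearMap.ker (P b).mulVecLin) :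
    LinearMap.ker (phi P) ≤ Submodule.span ℝ {((fun _ => 1 : Fin n → ℝ), (-1 : Matrix (Fin 4) (Fin 4) ℝ))} := by
  obtain ⟨a, b, -, ha, hb, hne⟩ := hab
  rintro ⟨c, M⟩ hx
  rw [LinearMap.mem_ker] at hx
  have hx' : ∀ i, c i • P i + P i * M = 0 := fun i => congrFun hx i
  have hk : ∀ i x, c i • x + M.mulVec x ∈ LinearMap.ker (P i).mulVecLin := by
    intro i x
    rw [LinearMap.mem_ker, Matrix.mulVecLin_apply, Matrix.mulVec_add, Matrix.mulVec_smul,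
      Matrix.mulVec_mulVec, ← Matrix.smul_mulVec, ← Matrix.add_mulVec, hx' i, Matrix.zero_mulVec]
  have hdim : ∀ i, (P i).rank = 3 → finrank ℝ (LinearMap.ker (P i).mulVecLin) = 1 := by
    intro i hi
    have := LinearMap.finrank_range_add_finrank_ker (P i).mulVecLin
    rw [Matrix.rank] at hi
    simp at this
    omega
  have da := hdim a ha
  have db := hdim b hb
  set A := LinearMap.ker (P a).mulVecLin
  set B := LinearMap.ker (P b).mulVecLin
  have hinf : A ⊓ B = ⊥ := by
    by_contra h0
    have h1 : 0 < finrank ℝ (A ⊓ B : Submodule ℝ (Fin 4 → ℝ)) := by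
      rw [Nat.pos_iff_ne_zero, Ne, Submodule.finrank_eq_zero]; exact h0
    have hA := Submodule.eq_of_le_of_finrank_le (inf_le_left : A ⊓ B ≤ A) (by omega)
    have hB := Submodule.eq_of_le_of_finrank_le (inf_le_right : A ⊓ B ≤ B) (by omega)
    exact hne (hA.symm.trans hB)
  have hcc : c a = c b := by
    by_contra hcne
    have htop : A ⊔ B = ⊤ := by
      rw [eq_top_iff]
      intro x _
      have h := Submodule.sub_mem (A ⊔ B) (Submodule.mem_sup_left (hk a x))
        (Submodule.mem_sup_right (hk b x))
      have h' : (c a - c b) • x ∈ A ⊔ B := by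
        convert h using 1
        rw [sub_smul]; abel
      exact (Submodule.smul_mem_iff _ (sub_ne_zero.mpr hcne)).1 h'
    have := Submodule.finrank_add_le_finrank_add_finrank A B
    rw [htop, finrank_top] at this
    simp at this
    omega
  have hM : M = - (c a • (1 : Matrix (Fin 4) (Fin 4) ℝ)) := by
    apply Matrix.ext_of_mulVec_single
    intro i
    have h1 := hk a (Pi.single i 1)
    have h2 := hk b (Pi.single i 1)
    rw [← hcc] at h2
    have : _ ∈ A ⊓ B := ⟨h1, h2⟩
    rw [hinf, Submodule.mem_bot] at this
    rw [Matrix.neg_mulVec, Matrix.smul_mulVec, Matrix.one_mulVec]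
    exact eq_neg_of_add_eq_zero_right this
  have hc : ∀ i, c i = c a := by
    intro i
    have h := hx' i
    rw [hM, Matrix.mul_neg, Matrix.mul_smul, Matrix.mul_one, ← sub_eq_add_neg, ← sub_smul] at h
    rcases smul_eq_zero.1 h with h | h
    · exact sub_eq_zero.1 h
    · exact absurd h (hP i)
  rw [Submodule.mem_span_singleton]
  refine ⟨c a, ?_⟩
  ext i j
  · simp [hc i]
  · simp [hM]

/-- if every camera of the configuration `P` is nonzero and at least
two of them are rank-3 cameras with distinct centers, then the Jacobian `J_P` of
the epipolar system with respect to the cameras has rank at most `11n − 15`. -/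
theorem rank_JP_le {n : ℕ} (hn : 2 ≤ n) (G : SimpleGraph (Fin n))
    (P : Fin n → Matrix (Fin 3) (Fin 4) ℝ)
    (hP : ∀ i, P i ≠ 0)
    (hab : ∃ a b : Fin n, a ≠ b ∧ (P a).rank = 3 ∧ (P b).rank = 3 ∧
      LinearMap.ker (P a).mulVecLin ≠ LinearMap.ker (P b).mulVecLin) :
    LinearMap.rank (JP G P) ≤ (11 * n - 15 : ℕ) := by
  have h1 := LinearMap.finrank_range_add_finrank_ker (phi P)
  have h2 := LinearMap.finrank_range_add_finrank_ker (JP G P)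
  have h3 := Submodule.finrank_mono (phi_range G P)
  have h4 := (Submodule.finrank_mono (phi_ker P hP hab)).trans (finrank_span_le_card _)
  simp [Module.finrank_matrix, Module.finrank_pi_fintype] at h1 h2 h4
  rw [LinearMap.rank, ← Module.finrank_eq_rank]
  norm_cast
  omega
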